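/- Let p > 1 be a real number, set μ = min{1, p−1}, and let a > 0. Define, for s ≥ 0, T(s) = (a+s)^p s − a^p s − ((2+μ)/(p+1)) (a+s)^{p+1} + ((2+μ)/(p+1)) a^{p+1} + (2+μ) a^p s + (μ/2) p a^{p−1} s². Then T(0) = 0, T'(0) = 0, T''(0) = 0, and for every s ≥ 0 the third derivative is given by T'''(s) = p(p−1)(p−2)(a+s)^{p−3} s + p(p−1)(1−μ)(a+s)^{p−2}, which is nonnegative for all s ≥ 0. -/

import Mathlib

/-!
The functions `A (a+x)^q x + B (a+x)^(q+1) + C + D x + E x²` form a class closed under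
differentiation, with an explicit rule for the coefficients. `T` belongs to it with
`q = p`, `A = 1`, `B = -(2+μ)/(p+1)`, so three applications of the rule give `T'`, `T''` and `T'''`.
The third derivative factors as `p(p-1)(a+s)^(p-3) ((p-1-μ)s + (1-μ)a)`, and `μ ≤ min 1 (p-1)`
makes both terms of the last factor nonnegative.
-/

open Set

/-- The shifted power functions `A (a+x)^q x + B (a+x)^(q+1)` plus a quadratic polynomial: a class
containing `T` and its derivatives. The two exponents are tied together so that differentiation
only shifts `q`. -/
noncomputable def rpowAddQuadratic (a q A B C D E x : ℝ) : ℝ :=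
  A * (a + x) ^ q * x + B * (a + x) ^ (q + 1) + (C + D * x + E * x ^ 2)

theorem hasDerivAt_const_add_rpow {a x : ℝ} (hx : 0 < a + x) (q : ℝ) :
    HasDerivAt (fun y : ℝ => (a + y) ^ q) (q * (a + x) ^ (q - 1)) x := by
  simpa only [one_mul] using ((hasDerivAt_id' x).const_add a).rpow_const (p := q) (Or.inl hx.ne')

theorem hasDerivAt_rpowAddQuadratic {a x : ℝ} (hx : 0 < a + x) (q A B C D E : ℝ) :
    HasDerivAt (rpowAddQuadratic a q A B C D E)
      (rpowAddQuadratic a (q - 1) (A * q) (A + B * (q + 1)) D (2 * E) 0 x) x := by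
  have h_rpow_mul := ((hasDerivAt_const_add_rpow hx q).const_mul A).mul (hasDerivAt_id' x)
  have h_rpow := (hasDerivAt_const_add_rpow hx (q + 1)).const_mul B
  have h_quadratic := (((hasDerivAt_id' x).const_mul D).const_add C).add
    ((hasDerivAt_pow 2 x).const_mul E)
  refine ((h_rpow_mul.add h_rpow).add h_quadratic).congr_deriv ?_
  simp only [rpowAddQuadratic, add_sub_cancel_right, sub_add_cancel]
  push_cast
  ring

theorem eqOn_deriv_rpowAddQuadratic {f : ℝ → ℝ} {a q A B C D E : ℝ}
    (hf : EqOn f (rpowAddQuadratic a q A B C D E) (Ioi (-a))) :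
    EqOn (deriv f) (rpowAddQuadratic a (q - 1) (A * q) (A + B * (q + 1)) D (2 * E) 0)
      (Ioi (-a)) := fun _ hx =>
  (hf.deriv isOpen_Ioi hx).trans
    (hasDerivAt_rpowAddQuadratic (neg_lt_iff_pos_add'.mp hx) q A B C D E).deriv

theorem third_deriv_T_eq_mul {p a μ s : ℝ} (hs : 0 < a + s) :
    p * (p - 1) * (p - 2) * (a + s) ^ (p - 3) * s + p * (p - 1) * (1 - μ) * (a + s) ^ (p - 2) =
      p * (p - 1) * (a + s) ^ (p - 3) * ((p - 1 - μ) * s + (1 - μ) * a) := by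
  rw [show p - 2 = p - 3 + 1 by ring, Real.rpow_add_one hs.ne']
  ring

theorem third_deriv_T_nonneg {p a μ s : ℝ} (hp : 0 ≤ p * (p - 1)) (hμ : μ ≤ min 1 (p - 1))
    (ha : 0 < a) (hs : 0 ≤ s) :
    0 ≤ p * (p - 1) * (p - 2) * (a + s) ^ (p - 3) * s +
      p * (p - 1) * (1 - μ) * (a + s) ^ (p - 2) := by
  obtain ⟨hμ_one, hμ_sub⟩ := le_min_iff.mp hμ
  have has : 0 < a + s := by positivity
  have h_linear : 0 ≤ (p - 1 - μ) * s + (1 - μ) * a :=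
    add_nonneg (mul_nonneg (sub_nonneg.mpr hμ_sub) hs) (mul_nonneg (sub_nonneg.mpr hμ_one) ha.le)
  rw [third_deriv_T_eq_mul has]
  exact mul_nonneg (mul_nonneg hp (Real.rpow_nonneg has.le _)) h_linear

theorem T_derivatives_general {p : ℝ} (hp : p ≠ -1) {a : ℝ} (ha : 0 < a) (μ : ℝ) {T : ℝ → ℝ}
    (hT : T = fun s : ℝ =>
      (a + s) ^ p * s - a ^ p * s
        - ((2 + μ) / (p + 1)) * (a + s) ^ (p + 1)
        + ((2 + μ) / (p + 1)) * a ^ (p + 1)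
        + (2 + μ) * a ^ p * s
        + (μ / 2) * p * a ^ (p - 1) * s ^ 2) :
    T 0 = 0 ∧ deriv T 0 = 0 ∧ deriv (deriv T) 0 = 0 ∧
      (∀ s, -a < s → deriv (deriv (deriv T)) s =
        p * (p - 1) * (p - 2) * (a + s) ^ (p - 3) * s +
          p * (p - 1) * (1 - μ) * (a + s) ^ (p - 2)) ∧
      (0 ≤ p * (p - 1) → μ ≤ min 1 (p - 1) → ∀ s, 0 ≤ s →
        0 ≤ p * (p - 1) * (p - 2) * (a + s) ^ (p - 3) * s +
          p * (p - 1) * (1 - μ) * (a + s) ^ (p - 2)) := by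
  have hp_add : p + 1 ≠ 0 := fun h => hp (eq_neg_of_add_eq_zero_left h)
  have hT₀ : T = rpowAddQuadratic a p 1 (-((2 + μ) / (p + 1)))
      ((2 + μ) / (p + 1) * a ^ (p + 1)) ((1 + μ) * a ^ p) (μ / 2 * p * a ^ (p - 1)) := by
    funext s
    simp only [hT, rpowAddQuadratic]
    ring
  have hT₁ : EqOn (deriv T) (rpowAddQuadratic a (p - 1) p (-(1 + μ))
      ((1 + μ) * a ^ p) (μ * p * a ^ (p - 1)) 0) (Ioi (-a)) := by
    convert eqOn_deriv_rpowAddQuadratic (fun s _ => congrFun hT₀ s) using 2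
    all_goals field_simp
    ring
  have hT₂ : EqOn (deriv (deriv T)) (rpowAddQuadratic a (p - 2) (p * (p - 1)) (-(μ * p))
      (μ * p * a ^ (p - 1)) 0 0) (Ioi (-a)) := by
    convert eqOn_deriv_rpowAddQuadratic hT₁ using 2 <;> ring
  have hT₃ : EqOn (deriv (deriv (deriv T))) (rpowAddQuadratic a (p - 3) (p * (p - 1) * (p - 2))
      (p * (p - 1) * (1 - μ)) 0 0 0) (Ioi (-a)) := by
    convert eqOn_deriv_rpowAddQuadratic hT₂ using 2 <;> ring
  have h_zero_mem : (0 : ℝ) ∈ Ioi (-a) := neg_lt_zero.mpr ha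
  refine ⟨?_, ?_, ?_, fun s hs => ?_, fun hpp hμ s hs => third_deriv_T_nonneg hpp hμ ha hs⟩
  · simp [hT]
  · simp only [hT₁ h_zero_mem, rpowAddQuadratic, add_zero, sub_add_cancel]
    ring
  · simp [hT₂ h_zero_mem, rpowAddQuadratic, show p - 2 + 1 = p - 1 by ring]
  · simp [hT₃ hs, rpowAddQuadratic, show p - 3 + 1 = p - 2 by ring]

/-- computations in the proof of Lemma 3.5(i): with `p > 1`,
`μ = min {1, p-1}`, `a > 0` and
`T(s) = (a+s)^p s − a^p s − ((2+μ)/(p+1))(a+s)^{p+1} + ((2+μ)/(p+1)) a^{p+1}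
+ (2+μ) a^p s + (μ/2) p a^{p−1} s²`, one has `T(0) = T'(0) = T''(0) = 0` and, for
every `s ≥ 0`, `T'''(s) = p(p−1)(p−2)(a+s)^{p−3} s + p(p−1)(1−μ)(a+s)^{p−2} ≥ 0`. -/
theorem T_derivatives (p : ℝ) (hp : 1 < p) (a : ℝ) (ha : 0 < a)
    (μ : ℝ) (hμ : μ = min 1 (p - 1)) (T : ℝ → ℝ)
    (hT : T = fun s : ℝ =>
      (a + s) ^ p * s - a ^ p * s
        - ((2 + μ) / (p + 1)) * (a + s) ^ (p + 1)
        + ((2 + μ) / (p + 1)) * a ^ (p + 1)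
        + (2 + μ) * a ^ p * s
        + (μ / 2) * p * a ^ (p - 1) * s ^ 2) :
    T 0 = 0 ∧ deriv T 0 = 0 ∧ deriv (deriv T) 0 = 0 ∧
      ∀ s : ℝ, 0 ≤ s →
        deriv (deriv (deriv T)) s
            = p * (p - 1) * (p - 2) * (a + s) ^ (p - 3) * s
              + p * (p - 1) * (1 - μ) * (a + s) ^ (p - 2) ∧
          0 ≤ p * (p - 1) * (p - 2) * (a + s) ^ (p - 3) * s
              + p * (p - 1) * (1 - μ) * (a + s) ^ (p - 2) := by
  obtain ⟨hT₀, hT₁, hT₂, hT₃, hnonneg⟩ :=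
    T_derivatives_general (by linarith) ha μ hT
  exact ⟨hT₀, hT₁, hT₂, fun s hs =>
    ⟨hT₃ s (by linarith), hnonneg (by nlinarith) hμ.le s hs⟩⟩
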